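/- Let G' be a group and τ an automorphism of G' with τ ∘ τ = id, and let G := G' × G' with the swap automorphism σ(x,y) := (y,x), the automorphism τ_G(x,y) := (τ(x), τ(y)), and θ := σ ∘ τ_G, so θ(x,y) = (τ(y), τ(x)). Fix δ = (δ₁, δ₂) ∈ G and set x_δ := δ₁ · τ(δ₂)⁻¹. Then every element of G_δ := {(a, b) ∈ G^σ × G^θ : a⁻¹ · δ · b = δ} has the form ((u,u), (h, τ(h))) with u, h ∈ G', and the map ((u,u), (h, τ(h))) ↦ u is a group isomorphism from G_δ onto the τ-twisted centralizer C^τ_{x_δ} := {u ∈ G' : u⁻¹ · x_δ · τ(u) = x_δ}. -/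

import Mathlib

theorem aux_conj {G : Type*} [Group G] (a x b y : G) : a⁻¹ * x * b = y ↔ x * b = a * y := by
  rw [mul_assoc, inv_mul_eq_iff_eq_mul]

theorem aux_mul {G : Type*} [Group G] {x a b c d : G} (h : x * a = b * x) (k : x * c = d * x) :
    x * (a * c) = b * d * x := by
  rw [← mul_assoc, h, mul_assoc, k, mul_assoc]

theorem aux_inv {G : Type*} [Group G] {x a b : G} (h : x * a = b * x) :
    x * a⁻¹ = b⁻¹ * x := by
  rw [eq_inv_mul_iff_mul_eq, ← mul_assoc, ← h, mul_assoc, mul_inv_cancel, mul_one]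

/-- with `G = G' × G'`, swap `σ`, `θ(x,y) = (τ y, τ x)`, and
`x_δ := δ₁ τ(δ₂)⁻¹`, every element of `G_δ` has the form `((u,u),(h,τ h))` and
`((u,u),(h,τ h)) ↦ u` is a group isomorphism from `G_δ` onto the τ-twisted
centralizer `{u : u⁻¹ x_δ τ(u) = x_δ}`. -/
theorem stmt6 {G' : Type*} [Group G'] (τ : G' ≃* G') (hτ : ∀ g, τ (τ g) = g)
    (δ₁ δ₂ : G') :
    ∃ (S : Subgroup ((G' × G') × (G' × G'))) (C : Subgroup G'),
      (∀ p : (G' × G') × (G' × G'), p ∈ S ↔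
        (p.1.2 = p.1.1) ∧ (p.2.2 = τ p.2.1) ∧
        p.1.1⁻¹ * δ₁ * p.2.1 = δ₁ ∧ p.1.2⁻¹ * δ₂ * p.2.2 = δ₂) ∧
      (∀ u : G', u ∈ C ↔ u⁻¹ * (δ₁ * (τ δ₂)⁻¹) * τ u = δ₁ * (τ δ₂)⁻¹) ∧
      ∃ e : S ≃* C, ∀ p : S, (e p : G') = (p : (G' × G') × (G' × G')).1.1 := by
  simp only [aux_conj]
  let S : Subgroup ((G' × G') × (G' × G')) :=
    { carrier := {p | (p.1.2 = p.1.1) ∧ (p.2.2 = τ p.2.1) ∧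
        δ₁ * p.2.1 = p.1.1 * δ₁ ∧ δ₂ * p.2.2 = p.1.2 * δ₂}
      one_mem' := by simp
      mul_mem' := by
        rintro p q ⟨h1, h2, h3, h4⟩ ⟨k1, k2, k3, k4⟩
        refine ⟨?_, ?_, aux_mul h3 k3, aux_mul h4 k4⟩
        · simp [h1, k1]
        · simp [h2, k2]
      inv_mem' := by
        rintro p ⟨h1, h2, h3, h4⟩
        refine ⟨?_, ?_, aux_inv h3, aux_inv h4⟩
        · simp [h1]
        · simp [h2] }
  let C : Subgroup G' :=
    { carrier := {u | δ₁ * (τ δ₂)⁻¹ * τ u = u * (δ₁ * (τ δ₂)⁻¹)}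
      one_mem' := by simp
      mul_mem' := by
        intro a b ha hb
        simp only [Set.mem_setOf_eq, map_mul] at *
        exact aux_mul ha hb
      inv_mem' := by
        intro a ha
        simp only [Set.mem_setOf_eq, map_inv] at *
        exact aux_inv ha }
  have hSC : ∀ p : S, p.1.1.1 ∈ C := by
    rintro ⟨⟨⟨u, v⟩, ⟨h, k⟩⟩, h1, h2, h3, h4⟩
    change δ₁ * (τ δ₂)⁻¹ * τ u = u * (δ₁ * (τ δ₂)⁻¹)
    dsimp only at h1 h2 h3 h4
    subst h1 h2
    have h5 := congrArg τ h4
    rw [map_mul, map_mul, hτ] at h5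
    have h6 : τ v = τ δ₂ * h * (τ δ₂)⁻¹ := by rw [h5]; group
    rw [h6, ← mul_assoc v, ← h3]
    group
  let f : S →* C :=
    { toFun := fun p => ⟨p.1.1.1, hSC p⟩
      map_one' := rfl
      map_mul' := fun _ _ => rfl }
  refine ⟨S, C, fun p => Iff.rfl, fun u => Iff.rfl, MulEquiv.ofBijective f ⟨?_, ?_⟩, fun p => rfl⟩
  · rintro ⟨⟨⟨u, v⟩, ⟨h, k⟩⟩, h1, h2, h3, h4⟩ ⟨⟨⟨u', v'⟩, ⟨h', k'⟩⟩, h1', h2', h3', h4'⟩ e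
    have e' : u = u' := congrArg Subtype.val e
    dsimp only at h1 h2 h3 h4 h1' h2' h3' h4'
    subst e' h1 h2 h1' h2'
    have e2 : h = h' := mul_left_cancel (h3.trans h3'.symm)
    subst e2
    rfl
  · rintro ⟨u, hu⟩
    have hu' : δ₁ * (τ δ₂)⁻¹ * τ u = u * (δ₁ * (τ δ₂)⁻¹) := hu
    have key : δ₁⁻¹ * u * δ₁ = (τ δ₂)⁻¹ * τ u * τ δ₂ := by
      have : u = δ₁ * (τ δ₂)⁻¹ * τ u * (δ₁ * (τ δ₂)⁻¹)⁻¹ := by rw [hu']; group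
      calc δ₁⁻¹ * u * δ₁ = δ₁⁻¹ * (δ₁ * (τ δ₂)⁻¹ * τ u * (δ₁ * (τ δ₂)⁻¹)⁻¹) * δ₁ := by
            rw [← this]
        _ = _ := by group
    refine ⟨⟨((u, u), (δ₁⁻¹ * u * δ₁, τ (δ₁⁻¹ * u * δ₁))), rfl, rfl, ?_, ?_⟩, rfl⟩
    · dsimp only
      group
    · dsimp only
      rw [key]
      simp only [map_mul, map_inv, hτ]
      group
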